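/- Assume that for some r > 1 and every ε > 0 the uniform r-complete convergence condition Σ_{n≥1} n^{r−1} sup_{k≥0} P_k(|Z_{k+n}^k/n − I| > ε) < ∞ holds for some I ∈ (0,∞), that ϱ_α ∈ (0,1) satisfies ϱ_α → 0 and |log ϱ_α|/|log α| → 0 as α → 0, and that k*_α satisfies k*_α → ∞ and |log α| + k*_α·log(1−ϱ_α) → +∞. Write Δ(α) = Δ(α,ϱ_α) and let T_α = T((1−α)/(ϱ_α α)) be the SR procedure. Then for every 1 ≤ ℓ ≤ r, as α → 0: for each fixed ν ≥ 0, E_ν[(T_α−ν)^ℓ | T_α>ν] ~ inf_{τ∈Δ(α)} E_ν[(τ−ν)^ℓ | τ>ν] ~ (|log α|/I)^ℓ, and sup_{0≤ν≤k*_α} E_ν[(T_α−ν)^ℓ | T_α>ν] ~ inf_{τ∈Δ(α)} sup_{0≤ν≤k*_α} E_ν[(τ−ν)^ℓ | τ>ν] ~ (|log α|/I)^ℓ. -/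

import Mathlib

/-!
Let `L = |log α|`. All four quantities lie between `inf_{τ ∈ Δ(α)} E_ν[(τ-ν)^ℓ | τ > ν]` for a
fixed `ν` and `sup_{ν ≤ k_α} E_ν[(T_α-ν)^ℓ | T_α > ν]`, where `k_α = k*_α` in the maximal case and
`k_α = ν` in the pointwise one; in both cases `L + k_α log(1-ϱ_α) → ∞`. So it suffices to bound the
former from below (`eventually_le_criskPow_of_mem_Delta`) and the latter from above
(`eventually_criskPow_SR_le`) by `(L/I)^ℓ` up to factors tending to `1`.

*Membership* (`SR_mem_Delta`). Splitting `{T(h) ≤ k}` according to the value of `T(h)` and changing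
measure gives `h P_∞(T(h) ≤ k) ≤ ∑_{j<k} P_j(T(h) ≤ k) ≤ k`; averaging over the geometric prior
bounds the false alarm probability by `(1-ϱ)α/(1-α) ≤ α` as soon as `α ≤ ϱ_α`.

*Lower bound.* Every `τ ∈ Δ(α)` satisfies `P_∞(τ ≤ k) ≤ α(1-ϱ)^{-k}`. With `N = ⌊tL/I⌋ + 1`,
`t < 1`, change of measure on `F_{ν+N}` truncated at `Z ≤ (2-t) I N` gives
`P_ν(τ ≤ ν+N) ≤ e^{(2-t)IN} α (1-ϱ)^{-(ν+N)} + P_ν(Z_{ν+N}^ν/N > (2-t)I)`,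
which tends to `0` uniformly in `τ` because `t(2-t) < 1` and `ϱ_α → 0`. Hence the `ℓ`-th moment of
the delay is at least `N^ℓ (1-o(1))`.

*Upper bound.* As `R_n ≥ exp Z_n^ν` for `n > ν`, the event `T(h) > ν+n` forces
`Z_{ν+n}^ν < log h`, a large deviation when `n > log h/(I-ε)`. Summation by parts and the
`r`-complete convergence show that the `ℓ`-th moment is at most `(log h/(I-ε)+1)^ℓ + C`, with `C`
independent of `ν` and `h`, while `log h ~ L` for `h = (1-α)/(ϱ_α α)`. Finally
`P_ν(T_α > ν) = P_∞(T_α > ν) ≥ 1 - α(1-ϱ_α)^{-k_α} → 1` uniformly in `ν ≤ k_α`.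
-/


open MeasureTheory Filter Set Topology ENNReal

noncomputable section

/-- A general change-point model: a filtration `F` on `Ω`, probability measures `P k`
(the change occurs immediately after time `k`) and `Pinf` (no change), such that `P k`
and `Pinf` agree on `F n` for `n ≤ k` and are mutually absolutely continuous
on `F n` for `n > k`. -/
structure ChangePointModel (Ω : Type) [m0 : MeasurableSpace Ω] where
  F : ℕ → MeasurableSpace Ω
  F_le : ∀ n, F n ≤ m0
  F_mono : Monotone F
  F_zero : F 0 = ⊥
  P : ℕ → Measure Ω
  Pinf : Measure Ω
  P_prob : ∀ k, IsProbabilityMeasure (P k)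
  Pinf_prob : IsProbabilityMeasure Pinf
  agree : ∀ k n : ℕ, n ≤ k → (P k).trim (F_le n) = Pinf.trim (F_le n)
  ac₁ : ∀ k n : ℕ, k < n → (P k).trim (F_le n) ≪ Pinf.trim (F_le n)
  ac₂ : ∀ k n : ℕ, k < n → Pinf.trim (F_le n) ≪ (P k).trim (F_le n)

namespace ChangePointModel

variable {Ω : Type} [m0 : MeasurableSpace Ω] (M : ChangePointModel Ω)

/-- The log-likelihood ratio `Z n k = log (d(P k|F n)/d(P∞|F n))`. -/
def Z (n k : ℕ) (ω : Ω) : ℝ :=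
  Real.log ((((M.P k).trim (M.F_le n)).rnDeriv (M.Pinf.trim (M.F_le n))) ω).toReal

/-- A detection procedure: a stopping time of the filtration `F` with values in `{1,2,…,∞}`. -/
def IsDetection (τ : Ω → ℕ∞) : Prop :=
  (∀ ω, 1 ≤ τ ω) ∧ ∀ n : ℕ, MeasurableSet[M.F n] {ω | τ ω ≤ (n : ℕ∞)}

/-- The detection risk `R_ν(τ) = E_ν (τ - ν)⁺`. -/
def risk (ν : ℕ) (τ : Ω → ℕ∞) : ℝ≥0∞ :=
  ∫⁻ ω, ((τ ω - (ν : ℕ∞) : ℕ∞) : ℝ≥0∞) ∂(M.P ν)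

/-- The conditional detection risk `R*_ν(τ) = E_ν (τ - ν | τ > ν)`. -/
def crisk (ν : ℕ) (τ : Ω → ℕ∞) : ℝ≥0∞ :=
  M.risk ν τ / M.P ν {ω | (ν : ℕ∞) < τ ω}

/-- The moment-`ℓ` detection risk `E_ν ((τ - ν)⁺)^ℓ`. -/
def riskPow (ℓ : ℝ) (ν : ℕ) (τ : Ω → ℕ∞) : ℝ≥0∞ :=
  ∫⁻ ω, ((τ ω - (ν : ℕ∞) : ℕ∞) : ℝ≥0∞) ^ ℓ ∂(M.P ν)

/-- The conditional moment-`ℓ` detection risk `E_ν ((τ - ν)^ℓ | τ > ν)`. -/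
def criskPow (ℓ : ℝ) (ν : ℕ) (τ : Ω → ℕ∞) : ℝ≥0∞ :=
  M.riskPow ℓ ν τ / M.P ν {ω | (ν : ℕ∞) < τ ω}

/-- The Bayesian class `Δ(α,ϱ)` of detection procedures with weighted probability of
false alarm at most `α` (geometric prior with parameter `ϱ`). -/
def Delta (α ϱ : ℝ) : Set (Ω → ℕ∞) :=
  {τ | M.IsDetection τ ∧
    ∑' k : ℕ, ENNReal.ofReal (ϱ * (1 - ϱ) ^ k) * M.Pinf {ω | τ ω ≤ (k : ℕ∞)}
      ≤ ENNReal.ofReal α}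

/-- The Shiryaev–Roberts statistic `R_n = ∑_{k=1}^n exp (Z_n^{k-1})`. -/
def SRstat (n : ℕ) (ω : Ω) : ℝ :=
  ∑ k ∈ Finset.range n, Real.exp (M.Z n k ω)

/-- The Shiryaev–Roberts procedure with threshold `h`. -/
def SR (h : ℝ) (ω : Ω) : ℕ∞ :=
  sInf {n : ℕ∞ | ∃ m : ℕ, n = (m : ℕ∞) ∧ 1 ≤ m ∧ h ≤ M.SRstat m ω}

/-- Condition (A1): `Z (k+n) k / n → I` almost surely under `P k`, for every `k`. -/
def CondA1 (I : ℝ) : Prop :=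
  ∀ k : ℕ, ∀ᵐ ω ∂(M.P k),
    Tendsto (fun n : ℕ => M.Z (k + n) k ω / n) atTop (𝓝 I)

/-- Condition (A2): uniform complete convergence of `Z (k+n) k / n` to `I`. -/
def CondA2 (I : ℝ) : Prop :=
  ∀ ε : ℝ, 0 < ε →
    (∑' n : ℕ, ⨆ k : ℕ,
      M.P k {ω | ε < |M.Z (k + (n + 1)) k ω / (n + 1) - I|}) < ⊤

/-- Uniform `r`-complete convergence of `Z (k+n) k / n` to `I`. -/
def CondAr (r I : ℝ) : Prop :=
  ∀ ε : ℝ, 0 < ε →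
    (∑' n : ℕ, ENNReal.ofReal ((n + 1 : ℝ) ^ (r - 1)) * ⨆ k : ℕ,
      M.P k {ω | ε < |M.Z (k + (n + 1)) k ω / (n + 1) - I|}) < ⊤

/-- The class `H(β,k*,m*)` : local probability of a false alarm in windows of
length `m*` starting at `1 ≤ k ≤ k* - m*` is at most `β`. -/
def Hclass (β : ℝ) (kstar mstar : ℕ) : Set (Ω → ℕ∞) :=
  {τ | M.IsDetection τ ∧ ∀ k : ℕ, 1 ≤ k → k + mstar ≤ kstar →
    M.Pinf {ω | (k : ℕ∞) ≤ τ ω ∧ τ ω < ((k + mstar : ℕ) : ℕ∞)} ≤ ENNReal.ofReal β}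

/-- The class `H*(β,k*,m*)` : local conditional probability of a false alarm
`P_∞(τ < k+m* | τ > k)` is at most `β` for `1 ≤ k ≤ k* - m*`. -/
def HclassStar (β : ℝ) (kstar mstar : ℕ) : Set (Ω → ℕ∞) :=
  {τ | M.IsDetection τ ∧ ∀ k : ℕ, 1 ≤ k → k + mstar ≤ kstar →
    M.Pinf {ω | (k : ℕ∞) < τ ω ∧ τ ω < ((k + mstar : ℕ) : ℕ∞)}
        / M.Pinf {ω | (k : ℕ∞) < τ ω} ≤ ENNReal.ofReal β}

end ChangePointModel

/-- `ϱ_{1,β} = 1/(1+|log β|)`. -/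
def rho1 (β : ℝ) : ℝ := 1 / (1 + |Real.log β|)

/-- `ϱ_{2,β} = ϱ_{1,β}/(1+|log|log β||)`. -/
def rho2 (β : ℝ) : ℝ := rho1 β / (1 + |Real.log (|Real.log β|)|)

/-- `α₁(β,m*) = β + (1-ϱ_{1,β})^{m*+1}`. -/
def alpha1 (β : ℝ) (m : ℕ) : ℝ := β + (1 - rho1 β) ^ (m + 1)

/-- `α₂(β,k*) = β (1-ϱ_{2,β})^{k*}`. -/
def alpha2 (β : ℝ) (k : ℕ) : ℝ := β * (1 - rho2 β) ^ k

/-- `α₃(β,k*) = β (1-ϱ_{2,β})^{k*} / (1+β)`. -/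
def alpha3 (β : ℝ) (k : ℕ) : ℝ := β * (1 - rho2 β) ^ k / (1 + β)

lemma add_one_rpow_le_of_one_le {x ℓ : ℝ} (hx : 0 ≤ x) (hℓ : 1 ≤ ℓ) :
    (x + 1) ^ ℓ ≤ x ^ ℓ + ℓ * (x + 1) ^ (ℓ - 1) := by
  have hx1 : 0 < x + 1 := by linarith
  have hratio : x / (x + 1) = 1 + -(x + 1)⁻¹ := by field_simp; ring
  have bernoulli : 1 + ℓ * -(x + 1)⁻¹ ≤ (x / (x + 1)) ^ ℓ := by
    rw [hratio]
    exact one_add_mul_self_le_rpow_one_add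
      (neg_le_neg (inv_le_one_of_one_le₀ (by linarith))) hℓ
  have hscaled := mul_le_mul_of_nonneg_left bernoulli (Real.rpow_nonneg hx1.le ℓ)
  rw [Real.div_rpow hx hx1.le, mul_div_cancel₀ _ (Real.rpow_pos_of_pos hx1 ℓ).ne'] at hscaled
  rw [Real.rpow_sub_one hx1.ne', div_eq_mul_inv]
  linarith

lemma add_one_rpow_le {x ℓ r : ℝ} (hx : 1 ≤ x) (hℓ : 0 < ℓ) (hℓr : ℓ ≤ r) (hr : 1 ≤ r) :
    (x + 1) ^ ℓ ≤ x ^ ℓ + r * 2 ^ (r - 1) * x ^ (r - 1) := by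
  have hx0 : 0 ≤ x := by linarith
  have hdouble : (x + 1) ^ (r - 1) ≤ 2 ^ (r - 1) * x ^ (r - 1) := by
    rw [← Real.mul_rpow zero_le_two hx0]
    exact Real.rpow_le_rpow (by linarith) (by linarith) (by linarith)
  have hincr : (x + 1) ^ ℓ ≤ x ^ ℓ + r * (x + 1) ^ (r - 1) := by
    rcases le_total ℓ 1 with hℓ1 | hℓ1
    · have h := Real.rpow_add_le_add_rpow hx0 zero_le_one hℓ.le hℓ1
      rw [Real.one_rpow] at h
      nlinarith [Real.one_le_rpow (show 1 ≤ x + 1 by linarith) (sub_nonneg.2 hr)]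
    · have h := Real.rpow_le_rpow_of_exponent_le (show 1 ≤ x + 1 by linarith)
        (show ℓ - 1 ≤ r - 1 by linarith)
      exact (add_one_rpow_le_of_one_le hx0 hℓ1).trans (by gcongr)
  exact hincr.trans (by rw [mul_assoc]; gcongr)

lemma natCast_rpow_le_add_sum {ℓ r : ℝ} (hℓ : 0 < ℓ) (hℓr : ℓ ≤ r) (hr : 1 ≤ r) (N j : ℕ) :
    ((N + 1 + j : ℕ) : ℝ≥0∞) ^ ℓ ≤ ((N + 1 : ℕ) : ℝ≥0∞) ^ ℓ + ∑ i ∈ Finset.range j,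
      ENNReal.ofReal (r * 2 ^ (r - 1) * (((N + i : ℕ) : ℝ) + 1) ^ (r - 1)) := by
  induction j with
  | zero => simp
  | succ j ih =>
    have hstep := add_one_rpow_le (x := ((N + 1 + j : ℕ) : ℝ))
      (by exact_mod_cast (by omega : 1 ≤ N + 1 + j)) hℓ hℓr hr
    calc ((N + 1 + (j + 1) : ℕ) : ℝ≥0∞) ^ ℓ
        = ENNReal.ofReal ((((N + 1 + j : ℕ) : ℝ) + 1) ^ ℓ) := by
          rw [← ENNReal.ofReal_rpow_of_nonneg (by positivity) hℓ.le]
          norm_cast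
      _ ≤ ENNReal.ofReal (((N + 1 + j : ℕ) : ℝ) ^ ℓ) +
            ENNReal.ofReal (r * 2 ^ (r - 1) * ((N + 1 + j : ℕ) : ℝ) ^ (r - 1)) :=
          (ENNReal.ofReal_le_ofReal hstep).trans ENNReal.ofReal_add_le
      _ = ((N + 1 + j : ℕ) : ℝ≥0∞) ^ ℓ +
            ENNReal.ofReal (r * 2 ^ (r - 1) * (((N + j : ℕ) : ℝ) + 1) ^ (r - 1)) := by
          rw [← ENNReal.ofReal_rpow_of_nonneg (by positivity) hℓ.le, ENNReal.ofReal_natCast,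
            Nat.add_right_comm, Nat.cast_succ (R := ℝ)]
      _ ≤ _ := by
          rw [Finset.sum_range_succ, ← add_assoc]
          gcongr

lemma toENNReal_rpow_le_add_tsum {ℓ r : ℝ} (hℓ : 0 < ℓ) (hℓr : ℓ ≤ r) (hr : 1 ≤ r) (N : ℕ)
    (d : ℕ∞) :
    (d : ℝ≥0∞) ^ ℓ ≤ ((N + 1 : ℕ) : ℝ≥0∞) ^ ℓ + ∑' i : ℕ,
      ENNReal.ofReal (r * 2 ^ (r - 1) * (((N + i : ℕ) : ℝ) + 1) ^ (r - 1)) *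
        (Ioi ((N + i + 1 : ℕ) : ℕ∞)).indicator 1 d := by
  induction d with
  | top =>
    refine le_add_left (le_of_le_of_eq le_top (top_le_iff.1 ?_).symm)
    rw [← ENNReal.tsum_const_eq_top_of_ne_zero (α := ℕ) one_ne_zero]
    refine ENNReal.tsum_le_tsum fun i => ?_
    rw [indicator_of_mem (mem_Ioi.2 (ENat.natCast_lt_top _)), Pi.one_apply, mul_one,
      ENNReal.one_le_ofReal]
    have hbase : (1 : ℝ) ≤ ((N + i : ℕ) : ℝ) + 1 := by linarith [Nat.cast_nonneg (α := ℝ) (N + i)]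
    exact one_le_mul_of_one_le_of_one_le
      (one_le_mul_of_one_le_of_one_le hr (Real.one_le_rpow one_le_two (by linarith)))
      (Real.one_le_rpow hbase (by linarith))
  | coe m =>
    rw [ENat.toENNReal_coe]
    rcases le_total m (N + 1) with hm | hm
    · exact le_add_right (by gcongr)
    · obtain ⟨j, rfl⟩ := Nat.exists_eq_add_of_le hm
      refine (natCast_rpow_le_add_sum hℓ hℓr hr N j).trans (add_le_add_right ?_ _)
      refine (Finset.sum_le_sum fun i hi => ?_).trans (ENNReal.sum_le_tsum (Finset.range j))
      have hij : ((N + i + 1 : ℕ) : ℕ∞) < ((N + 1 + j : ℕ) : ℕ∞) := by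
        have := Finset.mem_range.1 hi
        exact_mod_cast (by omega : N + i + 1 < N + 1 + j)
      rw [indicator_of_mem (mem_Ioi.2 hij), Pi.one_apply, mul_one]

/-- Summation by parts for moments; allowing the exponent `r` in the weights to exceed the order
`ℓ` covers orders below `1` with the same weights. -/
lemma lintegral_toENNReal_rpow_le {Ω : Type*} [MeasurableSpace Ω] (μ : Measure Ω)
    [IsProbabilityMeasure μ] {d : Ω → ℕ∞} (hd : ∀ n : ℕ, MeasurableSet {ω | (n : ℕ∞) < d ω})
    {ℓ r : ℝ} (hℓ : 0 < ℓ) (hℓr : ℓ ≤ r) (hr : 1 ≤ r) (N : ℕ) :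
    ∫⁻ ω, (d ω : ℝ≥0∞) ^ ℓ ∂μ ≤ ((N + 1 : ℕ) : ℝ≥0∞) ^ ℓ + ∑' i : ℕ,
      ENNReal.ofReal (r * 2 ^ (r - 1) * (((N + i : ℕ) : ℝ) + 1) ^ (r - 1)) *
        μ {ω | ((N + i + 1 : ℕ) : ℕ∞) < d ω} := by
  have hmeas (n : ℕ) : Measurable fun ω => (Ioi (n : ℕ∞)).indicator (1 : ℕ∞ → ℝ≥0∞) (d ω) :=
    measurable_one.indicator (hd n)
  have hint (n : ℕ) : ∫⁻ ω, (Ioi (n : ℕ∞)).indicator (1 : ℕ∞ → ℝ≥0∞) (d ω) ∂μ =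
      μ {ω | (n : ℕ∞) < d ω} := lintegral_indicator_one (hd n)
  refine (lintegral_mono fun ω => toENNReal_rpow_le_add_tsum hℓ hℓr hr N (d ω)).trans_eq ?_
  rw [lintegral_add_left measurable_const, lintegral_const, measure_univ, mul_one,
    lintegral_tsum fun i => ((hmeas _).const_mul _).aemeasurable]
  simp only [lintegral_const_mul _ (hmeas _), hint]

lemma ofReal_one_sub_le_measure_lt {Ω β : Type*} [MeasurableSpace Ω] [LinearOrder β]
    (μ : Measure Ω) [IsProbabilityMeasure μ] {f : Ω → β} {b : β}
    (hf : MeasurableSet {ω | f ω ≤ b}) {q : ℝ} (hq : 0 ≤ q)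
    (h : μ {ω | f ω ≤ b} ≤ ENNReal.ofReal q) : ENNReal.ofReal (1 - q) ≤ μ {ω | b < f ω} := by
  have hcompl : {ω | b < f ω} = {ω | f ω ≤ b}ᶜ := by ext ω; simp
  rw [hcompl, prob_compl_eq_one_sub hf, ENNReal.ofReal_sub _ hq, ENNReal.ofReal_one]
  exact tsub_le_tsub_left h 1

lemma sum_measure_eq_le_one {Ω : Type*} [MeasurableSpace Ω] (μ : Measure Ω)
    [IsProbabilityMeasure μ] {d : Ω → ℕ∞} (hd : ∀ n : ℕ, MeasurableSet {ω | d ω = (n : ℕ∞)})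
    (s : Finset ℕ) : ∑ n ∈ s, μ {ω | d ω = (n : ℕ∞)} ≤ 1 := by
  refine (measure_biUnion_finset (fun i _ j _ hij => ?_) fun n _ => hd n).symm.trans_le prob_le_one
  refine disjoint_left.2 fun ω (hi : d ω = i) (hj : d ω = j) => hij ?_
  exact_mod_cast hi.symm.trans hj

lemma tendsto_div_ofReal_nhds_one {X : Type*} {f : Filter X} {u : X → ℝ≥0∞} {D : X → ℝ}
    (hD : ∀ᶠ x in f, 0 < D x)
    (hlow : ∀ c < 1, ∀ᶠ x in f, ENNReal.ofReal (c * D x) ≤ u x)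
    (hup : ∀ c > 1, ∀ᶠ x in f, u x ≤ ENNReal.ofReal (c * D x)) :
    Tendsto (fun x => u x / ENNReal.ofReal (D x)) f (𝓝 1) := by
  refine tendsto_order.2 ⟨fun a ha => ?_, fun a ha => ?_⟩
  · obtain ⟨c, -, hac, hc⟩ := ENNReal.lt_iff_exists_real_btwn.1 ha
    filter_upwards [hD, hlow c (ENNReal.ofReal_lt_one.1 hc)] with x hDx hx
    refine hac.trans_le ((ENNReal.le_div_iff_mul_le (Or.inl (ENNReal.ofReal_pos.2 hDx).ne')
      (Or.inl ENNReal.ofReal_ne_top)).2 ?_)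
    rwa [← ENNReal.ofReal_mul' hDx.le]
  · obtain ⟨c, -, hc, hca⟩ := ENNReal.lt_iff_exists_real_btwn.1 ha
    filter_upwards [hD, hup c (ENNReal.one_lt_ofReal.1 hc)] with x hDx hx
    refine (ENNReal.div_le_of_le_mul ?_).trans_lt hca
    rwa [← ENNReal.ofReal_mul' hDx.le]

lemma ofReal_pow_mul_le_tsum_geometric {ρ : ℝ} (hρ0 : 0 < ρ) (hρ1 : ρ ≤ 1) {p : ℕ → ℝ≥0∞}
    (hp : Monotone p) (k : ℕ) :
    ENNReal.ofReal ((1 - ρ) ^ k) * p k ≤ ∑' j : ℕ, ENNReal.ofReal (ρ * (1 - ρ) ^ j) * p j := by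
  have hweight : 0 ≤ 1 - ρ := by linarith
  have hgeom : HasSum (fun i : ℕ => ρ * (1 - ρ) ^ i) 1 := by
    simpa [hρ0.ne'] using (hasSum_geometric_of_lt_one hweight (by linarith)).mul_left ρ
  have hmass : ∑' i : ℕ, ENNReal.ofReal (ρ * (1 - ρ) ^ i) = 1 := by
    rw [← ENNReal.ofReal_tsum_of_nonneg (fun i => by positivity) hgeom.summable, hgeom.tsum_eq,
      ENNReal.ofReal_one]
  calc ENNReal.ofReal ((1 - ρ) ^ k) * p k
      = ∑' i : ℕ, ENNReal.ofReal (ρ * (1 - ρ) ^ i) * (ENNReal.ofReal ((1 - ρ) ^ k) * p k) := by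
        rw [ENNReal.tsum_mul_right, hmass, one_mul]
    _ ≤ ∑' i : ℕ, ENNReal.ofReal (ρ * (1 - ρ) ^ (k + i)) * p (k + i) := by
        refine ENNReal.tsum_le_tsum fun i => ?_
        rw [← mul_assoc, ← ENNReal.ofReal_mul (by positivity), mul_assoc, ← pow_add, add_comm i]
        gcongr
        exact hp (Nat.le_add_right k i)
    _ ≤ _ := ENNReal.tsum_comp_le_tsum_of_injective (add_right_injective k)
        fun j => ENNReal.ofReal (ρ * (1 - ρ) ^ j) * p j

lemma tsum_ofReal_geometric_mul_natCast {ρ : ℝ} (hρ0 : 0 < ρ) (hρ1 : ρ ≤ 1) :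
    ∑' k : ℕ, ENNReal.ofReal (ρ * (1 - ρ) ^ k) * k = ENNReal.ofReal ((1 - ρ) / ρ) := by
  have hweight : 0 ≤ 1 - ρ := by linarith
  have hmean : HasSum (fun k : ℕ => ρ * (k * (1 - ρ) ^ k)) ((1 - ρ) / ρ) := by
    have hval : ρ * ((1 - ρ) / (1 - (1 - ρ)) ^ 2) = (1 - ρ) / ρ := by
      rw [_root_.sub_sub_cancel]
      field_simp
    rw [← hval]
    exact (hasSum_coe_mul_geometric_of_norm_lt_one
      (by rw [Real.norm_of_nonneg hweight]; linarith)).mul_left ρ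
  rw [← hmean.tsum_eq, ENNReal.ofReal_tsum_of_nonneg (fun k => by positivity) hmean.summable]
  refine tsum_congr fun k => ?_
  rw [← mul_assoc, mul_right_comm, ENNReal.ofReal_mul' k.cast_nonneg, ENNReal.ofReal_natCast]

lemma mul_inv_pow_eq_exp {α ρ : ℝ} (hα : α ∈ Ioo (0 : ℝ) 1) (hρ : ρ < 1) (k : ℕ) :
    α * ((1 - ρ) ^ k)⁻¹ = Real.exp (-(|Real.log α| + k * Real.log (1 - ρ))) := by
  rw [abs_of_neg (Real.log_neg hα.1 hα.2), neg_add, neg_neg, Real.exp_add, Real.exp_log hα.1,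
    Real.exp_neg, Real.exp_nat_mul, Real.exp_log (by linarith)]

lemma tendsto_abs_log_nhdsGT_zero : Tendsto (fun α : ℝ => |Real.log α|) (𝓝[>] 0) atTop :=
  tendsto_abs_atBot_atTop.comp Real.tendsto_log_nhdsGT_zero

lemma tendsto_log_one_sub {X : Type*} {f : Filter X} {u : X → ℝ} (hu : Tendsto u f (𝓝 0)) :
    Tendsto (fun x => Real.log (1 - u x)) f (𝓝 0) := by
  simpa using (hu.const_sub 1).log (by simp)

lemma tendsto_abs_log_add_const_mul_log {ϱ : ℝ → ℝ} (hϱ0 : Tendsto ϱ (𝓝[>] 0) (𝓝 0)) (c : ℝ) :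
    Tendsto (fun α : ℝ => |Real.log α| + c * Real.log (1 - ϱ α)) (𝓝[>] 0) atTop :=
  tendsto_abs_log_nhdsGT_zero.atTop_add ((tendsto_log_one_sub hϱ0).const_mul c)

lemma tendsto_log_threshold_div {ϱ : ℝ → ℝ} (hϱmem : ∀ α ∈ Ioo (0 : ℝ) 1, ϱ α ∈ Ioo (0 : ℝ) 1)
    (hϱlog : Tendsto (fun α : ℝ => |Real.log (ϱ α)| / |Real.log α|) (𝓝[>] 0) (𝓝 0)) :
    Tendsto (fun α : ℝ => Real.log ((1 - α) / (ϱ α * α)) / |Real.log α|) (𝓝[>] 0) (𝓝 1) := by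
  have hlog : Tendsto (fun α : ℝ => Real.log (1 - α)) (𝓝[>] 0) (𝓝 0) :=
    tendsto_log_one_sub (tendsto_id.mono_left nhdsWithin_le_nhds)
  have hsum : Tendsto (fun α : ℝ => Real.log (1 - α) / |Real.log α| +
      |Real.log (ϱ α)| / |Real.log α| + 1) (𝓝[>] 0) (𝓝 1) := by
    simpa using ((hlog.div_atTop tendsto_abs_log_nhdsGT_zero).add hϱlog).add_const 1
  refine hsum.congr' ?_
  filter_upwards [Ioo_mem_nhdsGT one_pos] with α hα
  have hρ := hϱmem α hα
  have hlogα := Real.log_neg hα.1 hα.2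
  rw [Real.log_div (by linarith [hα.2]) (mul_pos hρ.1 hα.1).ne', Real.log_mul hρ.1.ne' hα.1.ne',
    abs_of_neg (Real.log_neg hρ.1 hρ.2), abs_of_neg hlogα]
  field_simp [hlogα.ne]
  ring

lemma eventually_mul_add_one_rpow_add_le {a c ℓ : ℝ} (hℓ : 0 < ℓ) (ha : 0 ≤ a) (hac : a ^ ℓ < c)
    (C : ℝ) : ∀ᶠ x : ℝ in atTop, (a * x + 1) ^ ℓ + C ≤ c * x ^ ℓ := by
  have hratio : Tendsto (fun x : ℝ => (a + 1 / x) ^ ℓ + C / x ^ ℓ) atTop (𝓝 (a ^ ℓ)) := by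
    have hbase : Tendsto (fun x : ℝ => a + 1 / x) atTop (𝓝 a) := by
      simpa using (tendsto_id.const_div_atTop (1 : ℝ)).const_add a
    simpa using (hbase.rpow_const (Or.inr hℓ.le)).add
      ((tendsto_rpow_atTop hℓ).const_div_atTop C)
  filter_upwards [hratio.eventually_lt_const hac, eventually_gt_atTop 0] with x hx hx0
  have hxℓ := Real.rpow_pos_of_pos hx0 ℓ
  calc (a * x + 1) ^ ℓ + C = ((a + 1 / x) ^ ℓ + C / x ^ ℓ) * x ^ ℓ := by
        rw [add_mul, div_mul_cancel₀ _ hxℓ.ne', ← Real.mul_rpow (by positivity) hx0.le, add_mul,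
          div_mul_cancel₀ _ hx0.ne']
    _ ≤ c * x ^ ℓ := by gcongr

lemma tendsto_natFloor_mul_add_one_div_atTop {a : ℝ} (ha : 0 ≤ a) :
    Tendsto (fun x : ℝ => (⌊a * x⌋₊ + 1 : ℝ) / x) atTop (𝓝 a) := by
  simpa only [add_div, add_zero, id] using
    (tendsto_nat_floor_mul_div_atTop ha).add (tendsto_id.const_div_atTop (1 : ℝ))

/-- The exponent is `|log α|` times a quantity tending to `(2 - t) t - 1 = -(1 - t)^2 < 0`. -/
lemma tendsto_exp_mul_inv_pow {I t : ℝ} (hI : I ≠ 0) (ht : t < 1) {ϱ : ℝ → ℝ}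
    (hϱmem : ∀ α ∈ Ioo (0 : ℝ) 1, ϱ α ∈ Ioo (0 : ℝ) 1) (hϱ0 : Tendsto ϱ (𝓝[>] 0) (𝓝 0))
    {n : ℝ → ℕ} (hn : Tendsto (fun α => (n α + 1 : ℝ) / |Real.log α|) (𝓝[>] 0) (𝓝 (t / I)))
    (ν : ℕ) :
    Tendsto (fun α : ℝ => Real.exp ((I + (1 - t) * I) * (n α + 1)) *
      (α * ((1 - ϱ α) ^ (ν + (n α + 1)))⁻¹)) (𝓝[>] 0) (𝓝 0) := by
  have hL := tendsto_abs_log_nhdsGT_zero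
  have hrate : Tendsto (fun α => (I + (1 - t) * I) * ((n α + 1) / |Real.log α|) - 1 -
      (ν / |Real.log α| + (n α + 1) / |Real.log α|) * Real.log (1 - ϱ α)) (𝓝[>] 0)
      (𝓝 (-(1 - t) ^ 2)) := by
    have hlim : -(1 - t) ^ 2 = (I + (1 - t) * I) * (t / I) - 1 - (0 + t / I) * 0 := by
      field_simp
      ring
    rw [hlim]
    exact ((hn.const_mul _).sub_const 1).sub
      (((hL.const_div_atTop (ν : ℝ)).add hn).mul (tendsto_log_one_sub hϱ0))
  have hneg : -(1 - t) ^ 2 < 0 := neg_neg_of_pos (pow_pos (sub_pos.2 ht) 2)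
  refine (Real.tendsto_exp_atBot.comp (hL.atTop_mul_neg hneg hrate)).congr' ?_
  filter_upwards [Ioo_mem_nhdsGT one_pos, hL.eventually_gt_atTop 0] with α hα hLpos
  rw [Function.comp_apply, mul_inv_pow_eq_exp hα (hϱmem α hα).2, ← Real.exp_add]
  congr 1
  push_cast
  field_simp
  ring

namespace ChangePointModel

attribute [instance] ChangePointModel.P_prob ChangePointModel.Pinf_prob

variable {Ω : Type} [m0 : MeasurableSpace Ω] (M : ChangePointModel Ω)

/-! ### Change of measure -/

lemma measurable_Z (n k : ℕ) : Measurable[M.F n] (M.Z n k) :=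
  Real.measurable_log.comp (ENNReal.measurable_toReal.comp (Measure.measurable_rnDeriv _ _))

lemma measurable_ofReal_exp_Z (n k : ℕ) :
    Measurable[M.F n] fun ω => ENNReal.ofReal (Real.exp (M.Z n k ω)) :=
  ENNReal.measurable_ofReal.comp (Real.measurable_exp.comp (M.measurable_Z n k))

/-- The junk values of `Real.log` and `ENNReal.toReal` in `Z` only occur on a null set, by
mutual absolute continuity. -/
lemma ofReal_exp_Z_ae_eq_rnDeriv {n k : ℕ} (hkn : k < n) :
    (fun ω => ENNReal.ofReal (Real.exp (M.Z n k ω))) =ᵐ[M.Pinf.trim (M.F_le n)]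
      ((M.P k).trim (M.F_le n)).rnDeriv (M.Pinf.trim (M.F_le n)) := by
  filter_upwards [Measure.rnDeriv_pos' (M.ac₂ k n hkn),
    Measure.rnDeriv_lt_top ((M.P k).trim (M.F_le n)) (M.Pinf.trim (M.F_le n))] with ω hpos hfin
  rw [Z, Real.exp_log (ENNReal.toReal_pos hpos.ne' hfin.ne), ENNReal.ofReal_toReal hfin.ne]

lemma setLIntegral_ofReal_exp_Z {n k : ℕ} (hkn : k < n) {A : Set Ω}
    (hA : MeasurableSet[M.F n] A) :
    ∫⁻ ω in A, ENNReal.ofReal (Real.exp (M.Z n k ω)) ∂M.Pinf = M.P k A := by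
  rw [← trim_measurableSet_eq (M.F_le n) hA, ← Measure.setLIntegral_rnDeriv (M.ac₁ k n hkn),
    ← setLIntegral_trim (M.F_le n) (M.measurable_ofReal_exp_Z n k) hA]
  exact lintegral_congr_ae (ae_restrict_of_ae (M.ofReal_exp_Z_ae_eq_rnDeriv hkn))

lemma P_eq_Pinf {n k : ℕ} (hnk : n ≤ k) {A : Set Ω} (hA : MeasurableSet[M.F n] A) :
    M.P k A = M.Pinf A := by
  rw [← trim_measurableSet_eq (M.F_le n) hA, M.agree k n hnk, trim_measurableSet_eq (M.F_le n) hA]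

lemma P_le_exp_mul_Pinf_add {n k : ℕ} (hkn : k < n) {A : Set Ω} (hA : MeasurableSet[M.F n] A)
    (C : ℝ) :
    M.P k A ≤ ENNReal.ofReal (Real.exp C) * M.Pinf A + M.P k {ω | C < M.Z n k ω} := by
  have hB : MeasurableSet[M.F n] {ω | M.Z n k ω ≤ C} := M.measurable_Z n k measurableSet_Iic
  have hcover : A ⊆ (A ∩ {ω | M.Z n k ω ≤ C}) ∪ {ω | C < M.Z n k ω} := fun ω hω =>
    (le_or_gt (M.Z n k ω) C).imp (And.intro hω) id
  have htrunc : M.P k (A ∩ {ω | M.Z n k ω ≤ C}) ≤ ENNReal.ofReal (Real.exp C) * M.Pinf A := by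
    rw [← M.setLIntegral_ofReal_exp_Z hkn (hA.inter hB)]
    calc ∫⁻ ω in A ∩ {ω | M.Z n k ω ≤ C}, ENNReal.ofReal (Real.exp (M.Z n k ω)) ∂M.Pinf
        ≤ ∫⁻ _ in A ∩ {ω | M.Z n k ω ≤ C}, ENNReal.ofReal (Real.exp C) ∂M.Pinf :=
          setLIntegral_mono' (M.F_le n _ (hA.inter hB)) fun ω hω =>
            ENNReal.ofReal_le_ofReal (Real.exp_le_exp.2 hω.2)
      _ = ENNReal.ofReal (Real.exp C) * M.Pinf (A ∩ {ω | M.Z n k ω ≤ C}) := setLIntegral_const _ _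
      _ ≤ ENNReal.ofReal (Real.exp C) * M.Pinf A := by
          gcongr
          exact inter_subset_left
  exact (measure_mono hcover).trans ((measure_union_le _ _).trans (by gcongr))

/-! ### Detection procedures and false alarms -/

/-- The observation filtration as a Mathlib `Filtration`, giving access to the theory of stopping
times. -/
def filtration : Filtration ℕ m0 := ⟨M.F, M.F_mono, M.F_le⟩

variable {M}

lemma IsDetection.isStoppingTime {τ : Ω → ℕ∞} (hτ : M.IsDetection τ) :
    IsStoppingTime M.filtration τ := hτ.2

lemma IsDetection.measurableSet_lt {τ : Ω → ℕ∞} (hτ : M.IsDetection τ) (n : ℕ) :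
    MeasurableSet {ω | (n : ℕ∞) < τ ω} :=
  M.F_le n _ (hτ.isStoppingTime.measurableSet_gt n)

lemma Pinf_le_of_mem_Delta {α ρ : ℝ} (hρ : ρ ∈ Ioo (0 : ℝ) 1) {τ : Ω → ℕ∞}
    (hτ : τ ∈ M.Delta α ρ) (k : ℕ) :
    M.Pinf {ω | τ ω ≤ (k : ℕ∞)} ≤ ENNReal.ofReal (α * ((1 - ρ) ^ k)⁻¹) := by
  have hpow : 0 < (1 - ρ) ^ k := pow_pos (sub_pos.2 hρ.2) k
  have hmono : Monotone fun k : ℕ => M.Pinf {ω | τ ω ≤ (k : ℕ∞)} := fun i j hij =>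
    measure_mono fun ω (hω : τ ω ≤ i) => hω.trans (Nat.cast_le.2 hij)
  rw [← div_eq_mul_inv, ENNReal.ofReal_div_of_pos hpow, ENNReal.le_div_iff_mul_le
    (Or.inl (ENNReal.ofReal_pos.2 hpow).ne') (Or.inl ENNReal.ofReal_ne_top), mul_comm]
  exact (ofReal_pow_mul_le_tsum_geometric hρ.1 hρ.2.le hmono k).trans hτ.2

lemma ofReal_one_sub_le_P_lt_of_mem_Delta {α ρ : ℝ} (hα : 0 ≤ α) (hρ : ρ ∈ Ioo (0 : ℝ) 1)
    {τ : Ω → ℕ∞} (hτ : τ ∈ M.Delta α ρ) {ν k : ℕ} (hνk : ν ≤ k) :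
    ENNReal.ofReal (1 - α * ((1 - ρ) ^ k)⁻¹) ≤ M.P ν {ω | (ν : ℕ∞) < τ ω} := by
  have hρ1 : 0 ≤ 1 - ρ := sub_nonneg.2 hρ.2.le
  refine ofReal_one_sub_le_measure_lt _ (M.F_le ν _ (hτ.1.2 ν)) (by positivity) ?_
  calc M.P ν {ω | τ ω ≤ (ν : ℕ∞)} = M.Pinf {ω | τ ω ≤ (ν : ℕ∞)} := M.P_eq_Pinf le_rfl (hτ.1.2 ν)
    _ ≤ M.Pinf {ω | τ ω ≤ (k : ℕ∞)} :=
        measure_mono fun ω (hω : τ ω ≤ ν) => hω.trans (Nat.cast_le.2 hνk)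
    _ ≤ _ := Pinf_le_of_mem_Delta hρ hτ k

variable (M)

/-! ### The Shiryaev–Roberts procedure -/

lemma SR_le_iff (h : ℝ) (ω : Ω) (n : ℕ) :
    M.SR h ω ≤ (n : ℕ∞) ↔ ∃ m : ℕ, 1 ≤ m ∧ m ≤ n ∧ h ≤ M.SRstat m ω := by
  refine ⟨fun hle => ?_, fun ⟨m, hm, hmn, hR⟩ =>
    le_trans (b := (m : ℕ∞)) (sInf_le ⟨m, rfl, hm, hR⟩) (Nat.cast_le.2 hmn)⟩
  by_contra! hnone
  have hlate : ((n + 1 : ℕ) : ℕ∞) ≤ M.SR h ω := by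
    refine le_sInf ?_
    rintro _ ⟨m, rfl, hm, hR⟩
    exact Nat.cast_le.2 (Nat.lt_of_not_le fun hmn => (hnone m hm hmn).not_ge hR)
  exact absurd (Nat.cast_le.1 (hlate.trans hle)) (Nat.not_succ_le_self n)

lemma measurable_SRstat (n : ℕ) : Measurable[M.F n] (M.SRstat n) :=
  Finset.measurable_fun_sum _ fun k _ => Real.measurable_exp.comp (M.measurable_Z n k)

lemma isDetection_SR (h : ℝ) : M.IsDetection (M.SR h) := by
  refine ⟨fun ω => le_sInf ?_, fun n => ?_⟩
  · rintro _ ⟨m, rfl, hm, -⟩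
    exact_mod_cast hm
  · have hunion : {ω | M.SR h ω ≤ (n : ℕ∞)} =
        ⋃ m ∈ Finset.Icc 1 n, {ω | h ≤ M.SRstat m ω} := by
      ext ω
      simp [SR_le_iff, and_assoc]
    rw [hunion]
    exact Finset.measurableSet_biUnion _ fun m hm =>
      M.F_mono (Finset.mem_Icc.1 hm).2 _ (M.measurable_SRstat m measurableSet_Ici)

lemma le_SRstat_of_SR_eq {h : ℝ} {ω : Ω} {n : ℕ} (hω : M.SR h ω = (n : ℕ∞)) :
    h ≤ M.SRstat n ω := by
  obtain ⟨m, hm, hmn, hR⟩ := (M.SR_le_iff h ω n).1 hω.le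
  have hnm : (n : ℕ∞) ≤ m := hω ▸ (M.SR_le_iff h ω m).2 ⟨m, hm, le_rfl, hR⟩
  rwa [le_antisymm (Nat.cast_le.1 hnm) hmn]

lemma setLIntegral_SRstat (n : ℕ) {A : Set Ω} (hA : MeasurableSet[M.F n] A) :
    ∫⁻ ω in A, ENNReal.ofReal (M.SRstat n ω) ∂M.Pinf = ∑ j ∈ Finset.range n, M.P j A := by
  simp only [SRstat, ENNReal.ofReal_sum_of_nonneg fun _ _ => (Real.exp_pos _).le]
  rw [lintegral_finsetSum _ fun j _ => (M.measurable_ofReal_exp_Z n j).mono (M.F_le n) le_rfl]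
  exact Finset.sum_congr rfl fun j hj => M.setLIntegral_ofReal_exp_Z (Finset.mem_range.1 hj) hA

lemma ofReal_mul_Pinf_SR_eq_le (h : ℝ) (n : ℕ) :
    ENNReal.ofReal h * M.Pinf {ω | M.SR h ω = (n : ℕ∞)} ≤
      ∑ j ∈ Finset.range n, M.P j {ω | M.SR h ω = (n : ℕ∞)} := by
  have hA : MeasurableSet[M.F n] {ω | M.SR h ω = (n : ℕ∞)} :=
    (M.isDetection_SR h).isStoppingTime.measurableSet_eq n
  rw [← M.setLIntegral_SRstat n hA, ← setLIntegral_const]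
  exact setLIntegral_mono' (M.F_le n _ hA) fun ω hω =>
    ENNReal.ofReal_le_ofReal (M.le_SRstat_of_SR_eq hω)

lemma ofReal_mul_Pinf_SR_le (h : ℝ) (k : ℕ) :
    ENNReal.ofReal h * M.Pinf {ω | M.SR h ω ≤ (k : ℕ∞)} ≤ k := by
  have hcover : {ω | M.SR h ω ≤ (k : ℕ∞)} ⊆
      ⋃ n ∈ Finset.range (k + 1), {ω | M.SR h ω = (n : ℕ∞)} := fun ω hω => by
    obtain ⟨n, hn⟩ := ENat.ne_top_iff_exists.1 (ne_top_of_le_ne_top (ENat.natCast_ne_top k) hω)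
    have hnk : n ≤ k := Nat.cast_le.1 (hn.trans_le hω)
    exact mem_iUnion₂.2 ⟨n, Finset.mem_range_succ_iff.2 hnk, hn.symm⟩
  calc ENNReal.ofReal h * M.Pinf {ω | M.SR h ω ≤ (k : ℕ∞)}
      ≤ ENNReal.ofReal h * ∑ n ∈ Finset.range (k + 1), M.Pinf {ω | M.SR h ω = (n : ℕ∞)} := by
        gcongr
        exact (measure_mono hcover).trans (measure_biUnion_finset_le _ _)
    _ = ∑ n ∈ Finset.range (k + 1), ENNReal.ofReal h * M.Pinf {ω | M.SR h ω = (n : ℕ∞)} :=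
        Finset.mul_sum _ _ _
    _ ≤ ∑ n ∈ Finset.range (k + 1), ∑ j ∈ Finset.range k, M.P j {ω | M.SR h ω = (n : ℕ∞)} :=
        Finset.sum_le_sum fun n hn => (M.ofReal_mul_Pinf_SR_eq_le h n).trans
          (Finset.sum_le_sum_of_subset (Finset.range_mono (Finset.mem_range_succ_iff.1 hn)))
    _ = ∑ j ∈ Finset.range k, ∑ n ∈ Finset.range (k + 1), M.P j {ω | M.SR h ω = (n : ℕ∞)} :=
        Finset.sum_comm
    _ ≤ ∑ j ∈ Finset.range k, 1 := Finset.sum_le_sum fun j _ => sum_measure_eq_le_one _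
        (fun n => M.F_le n _ ((M.isDetection_SR h).isStoppingTime.measurableSet_eq n)) _
    _ = k := by simp

lemma tsum_geometric_mul_Pinf_SR_le {ρ h : ℝ} (hρ0 : 0 < ρ) (hρ1 : ρ ≤ 1) (hh : 0 < h) :
    ∑' k : ℕ, ENNReal.ofReal (ρ * (1 - ρ) ^ k) * M.Pinf {ω | M.SR h ω ≤ (k : ℕ∞)} ≤
      ENNReal.ofReal ((1 - ρ) / ρ / h) := by
  rw [ENNReal.ofReal_div_of_pos hh, ENNReal.le_div_iff_mul_le
    (Or.inl (ENNReal.ofReal_pos.2 hh).ne') (Or.inl ENNReal.ofReal_ne_top), mul_comm,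
    ← ENNReal.tsum_mul_left, ← tsum_ofReal_geometric_mul_natCast hρ0 hρ1]
  refine ENNReal.tsum_le_tsum fun k => ?_
  rw [mul_left_comm]
  gcongr
  exact M.ofReal_mul_Pinf_SR_le h k

lemma SR_mem_Delta {α ρ : ℝ} (hα : α ∈ Ioo (0 : ℝ) 1) (hρ1 : ρ ≤ 1) (hαρ : α ≤ ρ) :
    M.SR ((1 - α) / (ρ * α)) ∈ M.Delta α ρ := by
  have hα0 : 0 < α := hα.1
  have hα1 : 0 < 1 - α := sub_pos.2 hα.2
  have hρ0 : 0 < ρ := hα0.trans_le hαρ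
  refine ⟨M.isDetection_SR _, (M.tsum_geometric_mul_Pinf_SR_le hρ0 hρ1 (by positivity)).trans
    (ENNReal.ofReal_le_ofReal ?_)⟩
  calc (1 - ρ) / ρ / ((1 - α) / (ρ * α)) = α * ((1 - ρ) / (1 - α)) := by field_simp
    _ ≤ α := mul_le_of_le_one_right hα0.le ((div_le_one hα1).2 (by linarith))

lemma eventually_SR_mem_Delta {ϱ : ℝ → ℝ}
    (hϱmem : ∀ α ∈ Ioo (0 : ℝ) 1, ϱ α ∈ Ioo (0 : ℝ) 1)
    (hϱlog : Tendsto (fun α : ℝ => |Real.log (ϱ α)| / |Real.log α|) (𝓝[>] 0) (𝓝 0)) :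
    ∀ᶠ α in 𝓝[>] (0 : ℝ), M.SR ((1 - α) / (ϱ α * α)) ∈ M.Delta α (ϱ α) := by
  filter_upwards [hϱlog.eventually_lt_const one_pos, Ioo_mem_nhdsGT one_pos] with α hratio hα
  have hρ := hϱmem α hα
  have hlogα := Real.log_neg hα.1 hα.2
  rw [div_lt_one (abs_pos.2 hlogα.ne), abs_of_neg hlogα, abs_of_neg (Real.log_neg hρ.1 hρ.2),
    neg_lt_neg_iff] at hratio
  exact M.SR_mem_Delta hα hρ.2.le ((Real.log_lt_log_iff hα.1 hρ.1).1 hratio).le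

/-! ### Deviations of the log-likelihood ratio -/

/-- The uniform deviation probability `sup_k P_k(|Z_{k+n}^k / n - I| > ε)` at sample size `n + 1`;
the shift matches the indexing of the series in `CondAr`. -/
def maxDeviationProb (I ε : ℝ) (n : ℕ) : ℝ≥0∞ :=
  ⨆ k : ℕ, M.P k {ω | ε < |M.Z (k + (n + 1)) k ω / (n + 1) - I|}

variable {M} in
lemma tendsto_maxDeviationProb {r I ε : ℝ} (hr : 1 ≤ r) (hAr : M.CondAr r I) (hε : 0 < ε) :
    Tendsto (M.maxDeviationProb I ε) atTop (𝓝 0) := by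
  refine tendsto_of_tendsto_of_tendsto_of_le_of_le tendsto_const_nhds
    (ENNReal.tendsto_atTop_zero_of_tsum_ne_top (hAr ε hε).ne) (fun n => zero_le) fun n => ?_
  refine le_mul_of_one_le_left' (ENNReal.one_le_ofReal.2 (Real.one_le_rpow ?_ (by linarith)))
  linarith [n.cast_nonneg (α := ℝ)]

lemma P_le_maxDeviationProb (I ε : ℝ) (ν n : ℕ) {A : Set Ω}
    (hA : ∀ ω ∈ A, ε < |M.Z (ν + (n + 1)) ν ω / (n + 1) - I|) :
    M.P ν A ≤ M.maxDeviationProb I ε n :=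
  (measure_mono hA).trans
    (le_iSup (fun k => M.P k {ω | ε < |M.Z (k + (n + 1)) k ω / (n + 1) - I|}) ν)

lemma P_lt_Z_le_maxDeviationProb (I ε : ℝ) (ν n : ℕ) :
    M.P ν {ω | (I + ε) * (n + 1) < M.Z (ν + (n + 1)) ν ω} ≤ M.maxDeviationProb I ε n := by
  refine M.P_le_maxDeviationProb I ε ν n fun ω hω => lt_abs.2 (Or.inl ?_)
  rw [lt_sub_iff_add_lt', lt_div_iff₀ (by positivity)]
  exact hω

lemma Z_lt_log_of_lt_SR {h : ℝ} {ν n : ℕ} (hνn : ν < n) {ω : Ω} (hω : (n : ℕ∞) < M.SR h ω) :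
    M.Z n ν ω < Real.log h := by
  have hstat : M.SRstat n ω < h := lt_of_not_ge fun hR =>
    hω.not_ge ((M.SR_le_iff h ω n).2 ⟨n, Nat.one_le_of_lt hνn, le_rfl, hR⟩)
  have hterm : Real.exp (M.Z n ν ω) ≤ M.SRstat n ω :=
    Finset.single_le_sum (f := fun k => Real.exp (M.Z n k ω))
      (fun _ _ => (Real.exp_pos _).le) (Finset.mem_range.2 hνn)
  have hexp := hterm.trans_lt hstat
  exact (Real.lt_log_iff_exp_lt ((Real.exp_pos _).trans hexp)).2 hexp

lemma P_lt_SR_le_maxDeviationProb {h I ε : ℝ} {n : ℕ} (hlog : Real.log h ≤ (n + 1) * (I - ε))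
    (ν : ℕ) :
    M.P ν {ω | ((ν + (n + 1) : ℕ) : ℕ∞) < M.SR h ω} ≤ M.maxDeviationProb I ε n := by
  refine M.P_le_maxDeviationProb I ε ν n fun ω hω => lt_abs.2 (Or.inr ?_)
  have hZ : M.Z (ν + (n + 1)) ν ω / (n + 1) < I - ε :=
    (div_lt_iff₀' (by positivity)).2 ((M.Z_lt_log_of_lt_SR (by omega) hω).trans_le hlog)
  linarith

/-! ### Lower bound for the class `Δ(α, ϱ)` -/

variable {M}

lemma natCast_rpow_mul_P_lt_le_criskPow {ℓ : ℝ} (hℓ : 0 ≤ ℓ) (ν n : ℕ) {τ : Ω → ℕ∞}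
    (hτ : M.IsDetection τ) :
    (n : ℝ≥0∞) ^ ℓ * M.P ν {ω | ((ν + n : ℕ) : ℕ∞) < τ ω} ≤ M.criskPow ℓ ν τ := by
  have hmarkov : (n : ℝ≥0∞) ^ ℓ * M.P ν {ω | ((ν + n : ℕ) : ℕ∞) < τ ω} ≤ M.riskPow ℓ ν τ := by
    rw [← setLIntegral_const]
    refine (setLIntegral_mono' (hτ.measurableSet_lt (ν + n)) fun ω hω => ?_).trans
      (setLIntegral_le_lintegral _ _)
    have hdelay : (n : ℕ∞) < τ ω - ν := lt_tsub_iff_left.2 (by exact_mod_cast hω)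
    exact ENNReal.rpow_le_rpow (by exact_mod_cast ENat.toENNReal_le.2 hdelay.le) hℓ
  exact hmarkov.trans (le_mul_of_one_le_right' (ENNReal.one_le_inv.2 prob_le_one))

lemma P_le_of_mem_Delta {α ρ : ℝ} (hρ : ρ ∈ Ioo (0 : ℝ) 1) {τ : Ω → ℕ∞} (hτ : τ ∈ M.Delta α ρ)
    (I ε : ℝ) (ν n : ℕ) :
    M.P ν {ω | τ ω ≤ ((ν + (n + 1) : ℕ) : ℕ∞)} ≤
      ENNReal.ofReal (Real.exp ((I + ε) * (n + 1)) * (α * ((1 - ρ) ^ (ν + (n + 1)))⁻¹)) +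
        M.maxDeviationProb I ε n := by
  refine (M.P_le_exp_mul_Pinf_add (by omega) (hτ.1.2 _) ((I + ε) * (n + 1))).trans
    (add_le_add ?_ (M.P_lt_Z_le_maxDeviationProb I ε ν n))
  rw [ENNReal.ofReal_mul (Real.exp_pos _).le]
  gcongr
  exact Pinf_le_of_mem_Delta hρ hτ _

lemma eventually_P_le_of_mem_Delta {r I : ℝ} (hr : 1 ≤ r) (hI : 0 < I) (hAr : M.CondAr r I)
    {ϱ : ℝ → ℝ} (hϱmem : ∀ α ∈ Ioo (0 : ℝ) 1, ϱ α ∈ Ioo (0 : ℝ) 1)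
    (hϱ0 : Tendsto ϱ (𝓝[>] 0) (𝓝 0)) {t δ : ℝ} (ht0 : 0 < t) (ht1 : t < 1) (hδ : 0 < δ) (ν : ℕ) :
    ∀ᶠ α in 𝓝[>] (0 : ℝ), ∀ τ ∈ M.Delta α (ϱ α),
      M.P ν {ω | τ ω ≤ ((ν + (⌊t / I * |Real.log α|⌋₊ + 1) : ℕ) : ℕ∞)} ≤ ENNReal.ofReal δ := by
  have hfloor : Tendsto (fun α : ℝ => ⌊t / I * |Real.log α|⌋₊) (𝓝[>] 0) atTop :=
    tendsto_nat_floor_atTop.comp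
      (tendsto_abs_log_nhdsGT_zero.const_mul_atTop (div_pos ht0 hI))
  have hdev := (tendsto_maxDeviationProb hr hAr (mul_pos (sub_pos.2 ht1) hI)).comp hfloor
  have hratio : Tendsto (fun α : ℝ => (⌊t / I * |Real.log α|⌋₊ + 1 : ℝ) / |Real.log α|)
      (𝓝[>] 0) (𝓝 (t / I)) :=
    (tendsto_natFloor_mul_add_one_div_atTop (by positivity)).comp tendsto_abs_log_nhdsGT_zero
  have hbound := (ENNReal.tendsto_ofReal
    (tendsto_exp_mul_inv_pow hI.ne' ht1 hϱmem hϱ0 hratio ν)).add hdev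
  rw [ENNReal.ofReal_zero, add_zero] at hbound
  filter_upwards [hbound.eventually_lt_const (ENNReal.ofReal_pos.2 hδ), Ioo_mem_nhdsGT one_pos]
    with α hlt hα τ hτ
  exact (P_le_of_mem_Delta (hϱmem α hα) hτ I ((1 - t) * I) ν _).trans hlt.le

lemma eventually_le_criskPow_of_mem_Delta {r I : ℝ} (hr : 1 ≤ r) (hI : 0 < I)
    (hAr : M.CondAr r I) {ϱ : ℝ → ℝ} (hϱmem : ∀ α ∈ Ioo (0 : ℝ) 1, ϱ α ∈ Ioo (0 : ℝ) 1)
    (hϱ0 : Tendsto ϱ (𝓝[>] 0) (𝓝 0)) {ℓ : ℝ} (hℓ : 0 < ℓ) (ν : ℕ) {c : ℝ} (hc : c < 1) :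
    ∀ᶠ α in 𝓝[>] (0 : ℝ), ∀ τ ∈ M.Delta α (ϱ α),
      ENNReal.ofReal (c * (|Real.log α| / I) ^ ℓ) ≤ M.criskPow ℓ ν τ := by
  obtain ⟨t, hct, ht0, ht1⟩ : ∃ t : ℝ, c < t ^ ℓ * t ∧ t ∈ Ioo (0 : ℝ) 1 := by
    have hlim : Tendsto (fun t : ℝ => t ^ ℓ * t) (𝓝[<] 1) (𝓝 (1 ^ ℓ * 1)) :=
      ((tendsto_id.rpow_const (Or.inr hℓ.le)).mul tendsto_id).mono_left nhdsWithin_le_nhds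
    rw [Real.one_rpow, mul_one] at hlim
    exact ((hlim.eventually_const_lt hc).and (Ioo_mem_nhdsLT one_pos)).exists
  filter_upwards [eventually_P_le_of_mem_Delta hr hI hAr hϱmem hϱ0 ht0 ht1 (sub_pos.2 ht1) ν]
    with α hα τ hτ
  set n := ⌊t / I * |Real.log α|⌋₊ + 1
  have hsurvive : ENNReal.ofReal t ≤ M.P ν {ω | ((ν + n : ℕ) : ℕ∞) < τ ω} := by
    have h := ofReal_one_sub_le_measure_lt _ (M.F_le _ _ (hτ.1.2 (ν + n))) (sub_pos.2 ht1).le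
      (hα τ hτ)
    rwa [_root_.sub_sub_cancel] at h
  have hn : t * (|Real.log α| / I) ≤ n := by
    rw [mul_div_left_comm, mul_comm]
    exact_mod_cast (Nat.lt_floor_add_one (t / I * |Real.log α|)).le
  calc ENNReal.ofReal (c * (|Real.log α| / I) ^ ℓ)
      ≤ ENNReal.ofReal ((t * (|Real.log α| / I)) ^ ℓ * t) := by
        rw [Real.mul_rpow ht0.le (by positivity), mul_right_comm]
        gcongr
    _ ≤ (n : ℝ≥0∞) ^ ℓ * ENNReal.ofReal t := by
        rw [ENNReal.ofReal_mul (by positivity), ← ENNReal.ofReal_natCast,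
          ENNReal.ofReal_rpow_of_nonneg n.cast_nonneg hℓ.le]
        gcongr
    _ ≤ (n : ℝ≥0∞) ^ ℓ * M.P ν {ω | ((ν + n : ℕ) : ℕ∞) < τ ω} := by gcongr
    _ ≤ M.criskPow ℓ ν τ := natCast_rpow_mul_P_lt_le_criskPow hℓ.le ν n hτ.1

/-! ### Upper bound for the Shiryaev–Roberts procedure -/

variable (M) in
lemma riskPow_SR_le {ℓ r I ε h : ℝ} (hℓ : 0 < ℓ) (hℓr : ℓ ≤ r) (hr : 1 ≤ r) (hεI : ε ≤ I)
    {N : ℕ} (hlog : Real.log h ≤ (N + 1) * (I - ε)) (ν : ℕ) :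
    M.riskPow ℓ ν (M.SR h) ≤ ((N + 1 : ℕ) : ℝ≥0∞) ^ ℓ + ENNReal.ofReal (r * 2 ^ (r - 1)) *
      ∑' n : ℕ, ENNReal.ofReal ((n + 1 : ℝ) ^ (r - 1)) * M.maxDeviationProb I ε n := by
  have hshift (n : ℕ) : {ω | (n : ℕ∞) < M.SR h ω - ν} = {ω | ((ν + n : ℕ) : ℕ∞) < M.SR h ω} := by
    ext ω
    simp [lt_tsub_iff_left]
  have hmeas (n : ℕ) : MeasurableSet {ω | (n : ℕ∞) < M.SR h ω - ν} := by
    rw [hshift]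
    exact (M.isDetection_SR h).measurableSet_lt _
  have htail (i : ℕ) : M.P ν {ω | ((N + i + 1 : ℕ) : ℕ∞) < M.SR h ω - ν} ≤
      M.maxDeviationProb I ε (N + i) := by
    rw [hshift]
    refine M.P_lt_SR_le_maxDeviationProb (hlog.trans ?_) ν
    refine mul_le_mul_of_nonneg_right ?_ (sub_nonneg.2 hεI)
    exact_mod_cast Nat.succ_le_succ (Nat.le_add_right N i)
  refine (lintegral_toENNReal_rpow_le (M.P ν) hmeas hℓ hℓr hr N).trans (add_le_add_right ?_ _)
  rw [← ENNReal.tsum_mul_left]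
  refine le_trans (ENNReal.tsum_le_tsum fun i => ?_)
    (ENNReal.tsum_comp_le_tsum_of_injective (add_right_injective N) _)
  rw [ENNReal.ofReal_mul (by positivity), mul_assoc]
  gcongr
  exact htail i

lemma exists_riskPow_SR_le {ℓ r I ε : ℝ} (hℓ : 0 < ℓ) (hℓr : ℓ ≤ r) (hr : 1 ≤ r)
    (hAr : M.CondAr r I) (hε : 0 < ε) (hεI : ε ≤ I) :
    ∃ C : ℝ, ∀ (ν : ℕ) (h y : ℝ), 0 ≤ y → Real.log h ≤ y * (I - ε) →
      M.riskPow ℓ ν (M.SR h) ≤ ENNReal.ofReal ((y + 1) ^ ℓ + C) := by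
  set S := ENNReal.ofReal (r * 2 ^ (r - 1)) *
    ∑' n : ℕ, ENNReal.ofReal ((n + 1 : ℝ) ^ (r - 1)) * M.maxDeviationProb I ε n
  have hfin : S ≠ ⊤ := ENNReal.mul_ne_top ENNReal.ofReal_ne_top (hAr ε hε).ne
  refine ⟨S.toReal, fun ν h y hy hlog => (M.riskPow_SR_le hℓ hℓr hr hεI (N := ⌊y⌋₊) ?_ ν).trans ?_⟩
  · exact hlog.trans (mul_le_mul_of_nonneg_right (Nat.lt_floor_add_one y).le (sub_nonneg.2 hεI))
  · rw [ENNReal.ofReal_add (by positivity) ENNReal.toReal_nonneg, ENNReal.ofReal_toReal hfin,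
      ← ENNReal.ofReal_rpow_of_nonneg (by positivity) hℓ.le]
    gcongr
    rw [← ENNReal.ofReal_natCast, Nat.cast_succ]
    gcongr
    exact Nat.floor_le hy

lemma eventually_riskPow_SR_le {r I : ℝ} (hr : 1 ≤ r) (hI : 0 < I) (hAr : M.CondAr r I)
    {ϱ : ℝ → ℝ} (hϱmem : ∀ α ∈ Ioo (0 : ℝ) 1, ϱ α ∈ Ioo (0 : ℝ) 1)
    (hϱlog : Tendsto (fun α : ℝ => |Real.log (ϱ α)| / |Real.log α|) (𝓝[>] 0) (𝓝 0))
    {ℓ : ℝ} (hℓ : 0 < ℓ) (hℓr : ℓ ≤ r) {c : ℝ} (hc : 1 < c) :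
    ∀ᶠ α in 𝓝[>] (0 : ℝ), ∀ ν : ℕ,
      M.riskPow ℓ ν (M.SR ((1 - α) / (ϱ α * α))) ≤
        ENNReal.ofReal (c * (|Real.log α| / I) ^ ℓ) := by
  obtain ⟨s, hsc, hs⟩ : ∃ s : ℝ, (s * s) ^ ℓ < c ∧ 1 < s := by
    have hlim : Tendsto (fun s : ℝ => (s * s) ^ ℓ) (𝓝[>] 1) (𝓝 ((1 * 1) ^ ℓ)) :=
      ((tendsto_id.mul tendsto_id).rpow_const (Or.inr hℓ.le)).mono_left nhdsWithin_le_nhds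
    rw [mul_one, Real.one_rpow] at hlim
    exact ((hlim.eventually_lt_const hc).and self_mem_nhdsWithin).exists
  have hIs : 0 < I / s := div_pos hI (one_pos.trans hs)
  have hIs' : I / s < I := div_lt_self hI hs
  obtain ⟨C, hC⟩ := exists_riskPow_SR_le (ε := I - I / s) hℓ hℓr hr hAr (sub_pos.2 hIs')
    (sub_le_self I hIs.le)
  have hL := tendsto_abs_log_nhdsGT_zero
  filter_upwards [(tendsto_log_threshold_div hϱmem hϱlog).eventually_lt_const hs,
    hL.eventually_gt_atTop 0, (hL.atTop_div_const hI).eventually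
      (eventually_mul_add_one_rpow_add_le hℓ (by positivity) hsc C)] with α hratio hLpos hle ν
  refine (hC ν _ (s * s * (|Real.log α| / I)) (by positivity) ?_).trans
    (ENNReal.ofReal_le_ofReal hle)
  calc Real.log ((1 - α) / (ϱ α * α)) ≤ s * |Real.log α| := ((div_lt_iff₀ hLpos).1 hratio).le
    _ = s * s * (|Real.log α| / I) * (I - (I - I / s)) := by
        rw [_root_.sub_sub_cancel]
        field_simp

lemma eventually_le_P_lt_SR {ϱ : ℝ → ℝ} (hϱmem : ∀ α ∈ Ioo (0 : ℝ) 1, ϱ α ∈ Ioo (0 : ℝ) 1)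
    (hϱlog : Tendsto (fun α : ℝ => |Real.log (ϱ α)| / |Real.log α|) (𝓝[>] 0) (𝓝 0))
    {k : ℝ → ℕ}
    (hk : Tendsto (fun α : ℝ => |Real.log α| + k α * Real.log (1 - ϱ α)) (𝓝[>] 0) atTop)
    {δ : ℝ} (hδ : δ < 1) :
    ∀ᶠ α in 𝓝[>] (0 : ℝ), ∀ ν ≤ k α,
      ENNReal.ofReal δ ≤ M.P ν {ω | (ν : ℕ∞) < M.SR ((1 - α) / (ϱ α * α)) ω} := by
  have hexp := Real.tendsto_exp_neg_atTop_nhds_zero.comp hk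
  filter_upwards [hexp.eventually_le_const (sub_pos.2 hδ), M.eventually_SR_mem_Delta hϱmem hϱlog,
    Ioo_mem_nhdsGT one_pos] with α hα hmem hα01 ν hν
  rw [Function.comp_apply, ← mul_inv_pow_eq_exp hα01 (hϱmem α hα01).2] at hα
  exact le_trans (ENNReal.ofReal_le_ofReal (by linarith))
    (ofReal_one_sub_le_P_lt_of_mem_Delta hα01.1.le (hϱmem α hα01) hmem hν)

lemma eventually_criskPow_SR_le {r I : ℝ} (hr : 1 ≤ r) (hI : 0 < I) (hAr : M.CondAr r I)
    {ϱ : ℝ → ℝ} (hϱmem : ∀ α ∈ Ioo (0 : ℝ) 1, ϱ α ∈ Ioo (0 : ℝ) 1)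
    (hϱlog : Tendsto (fun α : ℝ => |Real.log (ϱ α)| / |Real.log α|) (𝓝[>] 0) (𝓝 0))
    {k : ℝ → ℕ}
    (hk : Tendsto (fun α : ℝ => |Real.log α| + k α * Real.log (1 - ϱ α)) (𝓝[>] 0) atTop)
    {ℓ : ℝ} (hℓ : 0 < ℓ) (hℓr : ℓ ≤ r) {c : ℝ} (hc : 1 < c) :
    ∀ᶠ α in 𝓝[>] (0 : ℝ), ∀ ν ≤ k α,
      M.criskPow ℓ ν (M.SR ((1 - α) / (ϱ α * α))) ≤
        ENNReal.ofReal (c * (|Real.log α| / I) ^ ℓ) := by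
  obtain ⟨s, hs1, hsc⟩ := exists_between hc
  have hs0 : 0 < s := one_pos.trans hs1
  filter_upwards [eventually_riskPow_SR_le hr hI hAr hϱmem hϱlog hℓ hℓr hs1,
    eventually_le_P_lt_SR (M := M) hϱmem hϱlog hk ((div_lt_one (hs0.trans hsc)).2 hsc)]
    with α hrisk hsurvive ν hν
  refine ENNReal.div_le_of_le_mul ((hrisk ν).trans ?_)
  calc ENNReal.ofReal (s * (|Real.log α| / I) ^ ℓ)
      = ENNReal.ofReal (c * (|Real.log α| / I) ^ ℓ) * ENNReal.ofReal (s / c) := by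
        rw [← ENNReal.ofReal_mul' (by positivity)]
        congr 1
        field_simp
    _ ≤ _ := by
        gcongr
        exact hsurvive ν hν

end ChangePointModel

theorem statement4_general
    {Ω : Type} [m0 : MeasurableSpace Ω] (M : ChangePointModel Ω)
    {r I : ℝ} (hr : 1 ≤ r) (hI : 0 < I) (hAr : M.CondAr r I)
    {ϱ : ℝ → ℝ} (hϱmem : ∀ α ∈ Ioo (0 : ℝ) 1, ϱ α ∈ Ioo (0 : ℝ) 1)
    (hϱ0 : Tendsto ϱ (𝓝[>] (0 : ℝ)) (𝓝 0))
    (hϱlog : Tendsto (fun α : ℝ => |Real.log (ϱ α)| / |Real.log α|) (𝓝[>] (0 : ℝ)) (𝓝 0))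
    {kstar : ℝ → ℕ}
    (hkstar : Tendsto (fun α : ℝ => |Real.log α| + (kstar α : ℝ) * Real.log (1 - ϱ α))
      (𝓝[>] (0 : ℝ)) atTop)
    {ℓ : ℝ} (hℓ : 0 < ℓ) (hℓr : ℓ ≤ r) :
    (∀ ν : ℕ,
      Tendsto (fun α : ℝ =>
        M.criskPow ℓ ν (M.SR ((1 - α) / (ϱ α * α)))
          / ENNReal.ofReal ((|Real.log α| / I) ^ ℓ))
        (𝓝[>] (0 : ℝ)) (𝓝 1)) ∧
    (∀ ν : ℕ,
      Tendsto (fun α : ℝ =>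
        (⨅ τ ∈ M.Delta α (ϱ α), M.criskPow ℓ ν τ)
          / ENNReal.ofReal ((|Real.log α| / I) ^ ℓ))
        (𝓝[>] (0 : ℝ)) (𝓝 1)) ∧
    (Tendsto (fun α : ℝ =>
        (⨆ ν ∈ Iic (kstar α), M.criskPow ℓ ν (M.SR ((1 - α) / (ϱ α * α))))
          / ENNReal.ofReal ((|Real.log α| / I) ^ ℓ))
        (𝓝[>] (0 : ℝ)) (𝓝 1)) ∧
    (Tendsto (fun α : ℝ =>
        (⨅ τ ∈ M.Delta α (ϱ α), ⨆ ν ∈ Iic (kstar α), M.criskPow ℓ ν τ)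
          / ENNReal.ofReal ((|Real.log α| / I) ^ ℓ))
        (𝓝[>] (0 : ℝ)) (𝓝 1)) := by
  have hscale : ∀ᶠ α in 𝓝[>] (0 : ℝ), 0 < (|Real.log α| / I) ^ ℓ :=
    (tendsto_abs_log_nhdsGT_zero.eventually_gt_atTop 0).mono fun α hα =>
      Real.rpow_pos_of_pos (div_pos hα hI) ℓ
  have hmem := M.eventually_SR_mem_Delta hϱmem hϱlog
  have hlow (ν : ℕ) (c : ℝ) (hc : c < 1) :=
    ChangePointModel.eventually_le_criskPow_of_mem_Delta hr hI hAr hϱmem hϱ0 hℓ ν hc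
  have hup {k : ℝ → ℕ} (hk) (c : ℝ) (hc : c > 1) :=
    ChangePointModel.eventually_criskPow_SR_le (k := k) hr hI hAr hϱmem hϱlog hk hℓ hℓr hc
  have hconst (ν : ℕ) := tendsto_abs_log_add_const_mul_log hϱ0 ν
  have hsup (k : ℕ) (τ : Ω → ℕ∞) : M.criskPow ℓ 0 τ ≤ ⨆ ν ∈ Iic k, M.criskPow ℓ ν τ :=
    le_iSup₂ (f := fun ν _ => M.criskPow ℓ ν τ) 0 (mem_Iic.2 k.zero_le)
  refine ⟨fun ν => ?_, fun ν => ?_, ?_, ?_⟩ <;>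
    refine tendsto_div_ofReal_nhds_one hscale (fun c hc => ?_) (fun c hc => ?_)
  · filter_upwards [hmem, hlow ν c hc] with α hα h using h _ hα
  · filter_upwards [hup (hconst ν) c hc] with α h using h ν le_rfl
  · filter_upwards [hlow ν c hc] with α h using le_iInf₂ h
  · filter_upwards [hmem, hup (hconst ν) c hc] with α hα h using (iInf₂_le _ hα).trans (h ν le_rfl)
  · filter_upwards [hmem, hlow 0 c hc] with α hα h using (h _ hα).trans (hsup _ _)
  · filter_upwards [hup hkstar c hc] with α h using iSup₂_le h
  · filter_upwards [hlow 0 c hc] with α h using le_iInf₂ fun τ hτ =>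
      (h τ hτ).trans (hsup _ τ)
  · filter_upwards [hmem, hup hkstar c hc] with α hα h using (iInf₂_le _ hα).trans (iSup₂_le h)

/-- Under uniform `r`-complete convergence (`r > 1`), `ϱ_α → 0`,
`|log ϱ_α|/|log α| → 0`, `k*_α → ∞` and `|log α| + k*_α log(1-ϱ_α) → +∞`, the SR procedure
`T_α` is asymptotically optimal in `Δ(α) = Δ(α,ϱ_α)` with respect to all conditional moments
of the detection delay of orders `1 ≤ ℓ ≤ r`, pointwise in `ν` and maximally over
`0 ≤ ν ≤ k*_α`, all quantities being equivalent to `(|log α|/I)^ℓ` as `α → 0`. -/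
theorem statement4
    {Ω : Type} [m0 : MeasurableSpace Ω] (M : ChangePointModel Ω)
    (r I : ℝ) (hr : 1 < r) (hI : 0 < I) (hAr : M.CondAr r I)
    (ϱ : ℝ → ℝ) (hϱmem : ∀ α ∈ Set.Ioo (0 : ℝ) 1, ϱ α ∈ Set.Ioo (0 : ℝ) 1)
    (hϱ0 : Tendsto ϱ (𝓝[>] (0 : ℝ)) (𝓝 0))
    (hϱlog : Tendsto (fun α : ℝ => |Real.log (ϱ α)| / |Real.log α|) (𝓝[>] (0 : ℝ)) (𝓝 0))
    (kstar : ℝ → ℕ)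
    (hk1 : Tendsto kstar (𝓝[>] (0 : ℝ)) atTop)
    (hk2 : Tendsto (fun α : ℝ => |Real.log α| + (kstar α : ℝ) * Real.log (1 - ϱ α))
      (𝓝[>] (0 : ℝ)) atTop) :
    ∀ ℓ : ℝ, 1 ≤ ℓ → ℓ ≤ r →
      (∀ ν : ℕ,
        Tendsto (fun α : ℝ =>
          M.criskPow ℓ ν (M.SR ((1 - α) / (ϱ α * α)))
            / ENNReal.ofReal ((|Real.log α| / I) ^ ℓ))
          (𝓝[>] (0 : ℝ)) (𝓝 1)) ∧
      (∀ ν : ℕ,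
        Tendsto (fun α : ℝ =>
          (⨅ τ ∈ M.Delta α (ϱ α), M.criskPow ℓ ν τ)
            / ENNReal.ofReal ((|Real.log α| / I) ^ ℓ))
          (𝓝[>] (0 : ℝ)) (𝓝 1)) ∧
      (Tendsto (fun α : ℝ =>
          (⨆ ν ∈ Set.Iic (kstar α), M.criskPow ℓ ν (M.SR ((1 - α) / (ϱ α * α))))
            / ENNReal.ofReal ((|Real.log α| / I) ^ ℓ))
          (𝓝[>] (0 : ℝ)) (𝓝 1)) ∧
      (Tendsto (fun α : ℝ =>
          (⨅ τ ∈ M.Delta α (ϱ α), ⨆ ν ∈ Set.Iic (kstar α), M.criskPow ℓ ν τ)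
            / ENNReal.ofReal ((|Real.log α| / I) ^ ℓ))
          (𝓝[>] (0 : ℝ)) (𝓝 1)) := by
  exact fun ℓ hℓ hℓr =>
    statement4_general M hr.le hI hAr hϱmem hϱ0 hϱlog hk2 (one_pos.trans_le hℓ) hℓr
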